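/- arXiv:math/0505647 — 2 statements merged into one kernel-verified Lean document; each statement's English description precedes it below -/
import Mathlib

section
/- T(4,3,2) = (\pi^4/90)\zeta(5) + (\pi^2/6)\zeta(7) - (5/2)\zeta(9). -/
/-- The Tornheim double series with natural number exponents. -/
noncomputable def tornheimN (a b c : ℕ) : ℝ :=
  ∑' n : ℕ+, ∑' m : ℕ+,
    1 / (((n : ℕ) : ℝ) ^ a * ((m : ℕ) : ℝ) ^ b * (((n : ℕ) + (m : ℕ) : ℕ) : ℝ) ^ c)

/-!
The identity `1 / (n m) = (1 / n + 1 / m) / (n + m)`, iterated, writes every `T(a, b, c)` as an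
integer combination of double zeta values `T(i, 0, k)`. Since `T(a, b, 0) = ζ(a) ζ(b)`, this also
evaluates products of zeta values (the shuffle relation); splitting the product over `n = m`,
`n < m` and `n > m` evaluates them a second time (the stuffle relation). One more relation, Euler's
sum formula, comes from summing `T(a, 1, 1)` over the second index by telescoping: the common term
`T(1, 0, a + 1)` cancels. In weight nine these relations eliminate all double zeta values from
`T(4, 3, 2)`.
-/

open Filter Finset
open scoped ENNReal NNReal Topology

lemma tsum_tsum_eq_diag_add_offDiag (f : ℕ+ → ℕ+ → ℝ≥0∞) :
    ∑' n, ∑' m, f n m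
      = ∑' n, f n n + ∑' n, ∑' k, f n (n + k) + ∑' n, ∑' k, f (n + k) n := by
  have tsum_add_left (g : ℕ+ → ℝ≥0∞) (n : ℕ+) :
      ∑' k, g (n + k) = ∑' m, if n < m then g m else 0 := by
    rw [← (add_right_injective n).tsum_eq (f := fun m => if n < m then g m else 0)]
    · simp only [PNat.lt_add_right, if_true]
    · intro m hm
      exact ⟨m - n, PNat.add_sub_of_lt (ite_ne_right_iff.1 hm).1⟩
  have diag : ∑' n, f n n = ∑' n, ∑' m, if m = n then f n m else 0 :=
    tsum_congr fun n => (tsum_ite_eq n (f n)).symm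
  have below : ∑' n, ∑' k, f (n + k) n = ∑' n, ∑' m, if m < n then f n m else 0 :=
    (tsum_congr fun n => tsum_add_left (f · n) n).trans ENNReal.tsum_comm
  rw [diag, below, tsum_congr fun n => tsum_add_left (f n) n]
  simp only [← ENNReal.tsum_add]
  refine tsum_congr fun n => tsum_congr fun m => ?_
  rcases lt_trichotomy n m with h | h | h
  · simp [h, h.ne', h.not_gt]
  · simp [h]
  · simp [h, h.ne, h.not_gt]

section LatticePaths

variable {M : Type*} [AddCommMonoid M]

/-- The contribution of the points `(i + 1, 0)` when a lattice path starts at `(a + 1, b + 1)`,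
takes steps `(-1, 0)` or `(0, -1)`, and stops on reaching an axis, each step raising the weight `c`
by one: there are `(j + b).choose b` paths ending at `(i + 1, 0)`, where `i + j = a`. -/
def pathSum (g : ℕ → ℕ → M) (a b c : ℕ) : M :=
  ∑ p ∈ antidiagonal a, (p.2 + b).choose b • g (p.1 + 1) (b + c + p.2 + 1)

lemma pathSum_succ_succ (g : ℕ → ℕ → M) (a b c : ℕ) :
    pathSum g (a + 1) (b + 1) c = pathSum g a (b + 1) (c + 1) + pathSum g (a + 1) b (c + 1) := by
  have pascal (j : ℕ) : (j + (b + 1)).choose (b + 1) = (j + b).choose (b + 1) + (j + b).choose b :=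
    (Nat.choose_succ_succ _ _).trans (add_comm _ _)
  have shift : ∑ p ∈ antidiagonal (a + 1),
      (p.2 + b).choose (b + 1) • g (p.1 + 1) (b + 1 + c + p.2 + 1)
        = pathSum g a (b + 1) (c + 1) := by
    rw [pathSum, Nat.sum_antidiagonal_succ', zero_add, Nat.choose_succ_self, zero_smul, zero_add]
    refine sum_congr rfl fun p _ => ?_
    congr 2 <;> ring
  have keep : ∑ p ∈ antidiagonal (a + 1), (p.2 + b).choose b • g (p.1 + 1) (b + 1 + c + p.2 + 1)
      = pathSum g (a + 1) b (c + 1) := by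
    rw [pathSum, add_right_comm b 1 c, add_assoc b c 1]
  rw [← shift, ← keep, ← sum_add_distrib]
  simp only [pathSum, pascal, add_smul]

lemma pathSum_succ_zero (g : ℕ → ℕ → M) (a c : ℕ) :
    pathSum g (a + 1) 0 c = pathSum g a 0 (c + 1) + g (a + 2) (c + 1) := by
  simp [pathSum, Nat.sum_antidiagonal_succ', add_comm, add_left_comm]

lemma pathSum_zero (g : ℕ → ℕ → M) (b c : ℕ) : pathSum g 0 b c = g 1 (b + c + 1) := by
  simp [pathSum]

lemma pathSum_zero_succ (g : ℕ → ℕ → M) (b c : ℕ) :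
    pathSum g 0 (b + 1) c = pathSum g 0 b (c + 1) := by
  rw [pathSum_zero, pathSum_zero, add_right_comm b 1 c, add_assoc b c 1]

lemma eq_pathSum_add_pathSum {f : ℕ → ℕ → ℕ → M}
    (hf : ∀ a b c, f (a + 1) (b + 1) c = f a (b + 1) (c + 1) + f (a + 1) b (c + 1)) (a b c : ℕ) :
    f (a + 1) (b + 1) c = pathSum (f · 0 ·) a b c + pathSum (f 0 · ·) b a c := by
  induction a generalizing b c with
  | zero =>
    induction b generalizing c with
    | zero => simp [hf, pathSum_zero, add_comm]
    | succ b ihb =>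
      rw [hf, ihb, pathSum_succ_zero, pathSum_zero_succ]
      abel
  | succ a iha =>
    induction b generalizing c with
    | zero =>
      rw [hf, iha, pathSum_succ_zero, pathSum_zero_succ]
      abel
    | succ b ihb =>
      rw [hf, iha, ihb, pathSum_succ_succ, pathSum_succ_succ]
      abel

end LatticePaths

lemma hasSum_sub_add_of_antitone {f : ℕ → ℝ} (hf : Antitone f) (hlim : Tendsto f atTop (𝓝 0))
    (r : ℕ) : HasSum (fun m => f m - f (m + r)) (∑ k ∈ range r, f k) := by
  rw [hasSum_iff_tendsto_nat_of_nonneg fun m => sub_nonneg.2 (hf (Nat.le_add_right m r))]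
  have partial_sum (N : ℕ) : ∑ m ∈ range N, (f m - f (m + r))
      = ∑ k ∈ range r, f k - ∑ k ∈ range r, f (N + k) := by
    have h := (sum_range_add f N r).symm.trans (add_comm N r ▸ sum_range_add f r N)
    rw [sum_sub_distrib]
    simp only [add_comm _ r]
    linarith
  have tail : Tendsto (fun N => ∑ k ∈ range r, f (N + k)) atTop (𝓝 0) := by
    simpa using tendsto_finsetSum (range r) fun k _ => (tendsto_add_atTop_iff_nat k).2 hlim
  simpa only [partial_sum, sub_zero] using tail.const_sub (∑ k ∈ range r, f k)

lemma hasSum_inv_mul_add (n : ℕ+) :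
    HasSum (fun m : ℕ+ => ((m : ℝ≥0) * (n + m))⁻¹) (∑ k ∈ range n, ((n : ℝ≥0) * (k + 1))⁻¹) := by
  have antitone : Antitone fun k : ℕ => 1 / ((k : ℝ) + 1) := fun _ _ h => Nat.one_div_le_one_div h
  have telescope := (hasSum_sub_add_of_antitone antitone
    tendsto_one_div_add_atTop_nhds_zero_nat n).mul_left (n : ℝ)⁻¹
  have term_eq (m : ℕ) : (((((m + 1 : ℕ) : ℝ≥0) * (n + (m + 1 : ℕ)))⁻¹ : ℝ≥0) : ℝ)
      = (n : ℝ)⁻¹ * (1 / ((m : ℝ) + 1) - 1 / (((m + n : ℕ) : ℝ) + 1)) := by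
    push_cast
    rw [← add_assoc, add_comm (n : ℝ) m]
    have hm : (m : ℝ) + n + 1 ≠ 0 := by positivity
    field_simp
    ring
  have sum_eq : ((∑ k ∈ range n, ((n : ℝ≥0) * (k + 1))⁻¹ : ℝ≥0) : ℝ)
      = (n : ℝ)⁻¹ * ∑ k ∈ range n, 1 / ((k : ℝ) + 1) := by
    rw [mul_sum]
    push_cast
    simp only [one_div, mul_inv]
  rw [hasSum_pnat_iff_hasSum_succ (f := fun m : ℕ => ((m : ℝ≥0) * (n + m))⁻¹),
    ← NNReal.hasSum_coe, sum_eq]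
  simpa only [term_eq] using telescope

lemma tsum_inv_mul_add (n : ℕ+) :
    ∑' m : ℕ+, ((((m : ℝ≥0) * (n + m))⁻¹ : ℝ≥0) : ℝ≥0∞)
      = ∑' k : ℕ+, if k ≤ n then ((((n : ℝ≥0) * k)⁻¹ : ℝ≥0) : ℝ≥0∞) else 0 := by
  rw [(ENNReal.hasSum_coe.2 (hasSum_inv_mul_add n)).tsum_eq]
  simp only [← PNat.coe_le_coe]
  rw [tsum_pnat_eq_tsum_succ
      (f := fun k : ℕ => if k ≤ n then ((((n : ℝ≥0) * k)⁻¹ : ℝ≥0) : ℝ≥0∞) else 0),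
    tsum_eq_sum (s := range n) fun k hk => if_neg (by simpa using hk), ENNReal.ofNNReal_finsetSum]
  refine sum_congr rfl fun k hk => ?_
  rw [if_pos (Nat.succ_le_of_lt (mem_range.1 hk)), Nat.cast_succ]

/-- The Tornheim series `T(a, b, c)` with values in the extended nonnegative reals, where double
sums may be rearranged without convergence hypotheses. -/
noncomputable def tornheimE (a b c : ℕ) : ℝ≥0∞ :=
  ∑' n : ℕ+, ∑' m : ℕ+,
    ((((n : ℝ≥0) ^ a * (m : ℝ≥0) ^ b * ((n : ℝ≥0) + m) ^ c)⁻¹ : ℝ≥0) : ℝ≥0∞)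

/-- The zeta series `ζ(a)` with values in the extended nonnegative reals. -/
noncomputable def zetaE (a : ℕ) : ℝ≥0∞ :=
  ∑' n : ℕ+, ((((n : ℝ≥0) ^ a)⁻¹ : ℝ≥0) : ℝ≥0∞)

lemma tornheimE_succ_succ (a b c : ℕ) :
    tornheimE (a + 1) (b + 1) c
      = tornheimE a (b + 1) (c + 1) + tornheimE (a + 1) b (c + 1) := by
  simp only [tornheimE, ← ENNReal.tsum_add, ← ENNReal.coe_add]
  refine tsum_congr fun n => tsum_congr fun m => congrArg _ ?_
  field_simp
  ring

lemma tornheimE_comm (a b c : ℕ) : tornheimE a b c = tornheimE b a c := by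
  unfold tornheimE
  rw [ENNReal.tsum_comm]
  simp only [mul_comm, add_comm]

lemma tornheimE_succ_succ_eq_pathSum (a b c : ℕ) :
    tornheimE (a + 1) (b + 1) c
      = pathSum (tornheimE · 0 ·) a b c + pathSum (tornheimE · 0 ·) b a c := by
  simpa only [tornheimE_comm 0] using eq_pathSum_add_pathSum tornheimE_succ_succ a b c

lemma zetaE_mul_zetaE (a b : ℕ) :
    zetaE a * zetaE b
      = ∑' n : ℕ+, ∑' m : ℕ+, ((((n : ℝ≥0) ^ a * (m : ℝ≥0) ^ b)⁻¹ : ℝ≥0) : ℝ≥0∞) := by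
  simp only [zetaE, ← ENNReal.tsum_mul_right, ← ENNReal.tsum_mul_left, ← ENNReal.coe_mul, mul_inv]
  rw [ENNReal.tsum_comm]

lemma tornheimE_zero_right (a b : ℕ) : tornheimE a b 0 = zetaE a * zetaE b := by
  simp only [tornheimE, zetaE_mul_zetaE, pow_zero, mul_one]

lemma zetaE_mul_zetaE_eq_stuffle (a b : ℕ) :
    zetaE a * zetaE b = zetaE (a + b) + tornheimE a 0 b + tornheimE b 0 a := by
  rw [zetaE_mul_zetaE, tsum_tsum_eq_diag_add_offDiag]
  simp only [zetaE, tornheimE, pow_add, pow_zero, mul_one, PNat.add_coe, Nat.cast_add,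
    mul_comm (((_ : ℝ≥0) + _) ^ a)]

lemma tornheimE_one_one (a : ℕ) : tornheimE a 1 1 = zetaE (a + 2) + tornheimE 1 0 (a + 1) := by
  have inner (n : ℕ+) :
      ∑' m : ℕ+, ((((n : ℝ≥0) ^ a * (m : ℝ≥0) ^ 1 * ((n : ℝ≥0) + m) ^ 1)⁻¹ : ℝ≥0) : ℝ≥0∞)
        = ∑' k : ℕ+, if k ≤ n then ((((n : ℝ≥0) ^ (a + 1) * k)⁻¹ : ℝ≥0) : ℝ≥0∞) else 0 := by
    simp only [pow_one, pow_succ _ a, mul_assoc, mul_inv ((n : ℝ≥0) ^ a), ENNReal.coe_mul,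
      ENNReal.tsum_mul_left, tsum_inv_mul_add, ← mul_ite_zero]
  have not_add_le (n k : ℕ+) : ¬ n + k ≤ n := (PNat.lt_add_right n k).not_ge
  have le_add (n k : ℕ+) : n ≤ n + k := (PNat.lt_add_right n k).le
  rw [tornheimE, tsum_congr inner, tsum_tsum_eq_diag_add_offDiag]
  simp only [zetaE, tornheimE, le_refl, not_add_le, le_add, if_true, if_false, tsum_zero, add_zero,
    pow_succ, pow_zero, one_mul, mul_one, PNat.add_coe, Nat.cast_add,
    mul_comm (_ * (_ + _) : ℝ≥0)]

lemma tsum_inv_rpow_ne_top {p : ℝ} (hp : 1 < p) :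
    ∑' n : ℕ+, ((((n : ℝ≥0) ^ p)⁻¹ : ℝ≥0) : ℝ≥0∞) ≠ ∞ := by
  rw [ENNReal.tsum_coe_ne_top_iff_summable]
  exact NNReal.summable_comp_injective (NNReal.summable_rpow_inv.2 hp) PNat.coe_injective

lemma zetaE_ne_top {a : ℕ} (ha : 1 < a) : zetaE a ≠ ∞ := by
  simpa only [zetaE, NNReal.rpow_natCast] using tsum_inv_rpow_ne_top (p := a) (mod_cast ha)

lemma tornheimE_anti {a b c a' b' c' : ℕ} (ha : a ≤ a') (hb : b ≤ b') (hc : c ≤ c') :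
    tornheimE a' b' c' ≤ tornheimE a b c := by
  refine ENNReal.tsum_le_tsum fun n => ENNReal.tsum_le_tsum fun m => ?_
  have hn : (1 : ℝ≥0) ≤ n := mod_cast n.pos
  have hm : (1 : ℝ≥0) ≤ m := mod_cast m.pos
  have hnm : (1 : ℝ≥0) ≤ n + m := le_add_right hn
  gcongr

lemma tornheimE_one_one_one_ne_top : tornheimE 1 1 1 ≠ ∞ := by
  let z : ℝ≥0∞ := ∑' n : ℕ+, ((((n : ℝ≥0) ^ (3 / 2 : ℝ))⁻¹ : ℝ≥0) : ℝ≥0∞)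
  have hz : z ≠ ∞ := tsum_inv_rpow_ne_top (by norm_num)
  have rpow_eq (x : ℝ≥0) : x ^ (3 / 2 : ℝ) = x * NNReal.sqrt x := by
    rw [NNReal.sqrt_eq_rpow, ← NNReal.rpow_one_add' (by norm_num)]
    norm_num
  have sqrt_mul_sqrt_le (x y : ℝ≥0) : NNReal.sqrt x * NNReal.sqrt y ≤ x + y := by
    rw [← NNReal.sqrt_mul, NNReal.sqrt_le_iff_le_sq, sq]
    exact mul_le_mul' le_self_add le_add_self
  have bound : tornheimE 1 1 1 ≤ z * z := by
    simp only [z, ← ENNReal.tsum_mul_right]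
    simp only [← ENNReal.tsum_mul_left, ← ENNReal.coe_mul, ← mul_inv]
    refine ENNReal.tsum_le_tsum fun n => ENNReal.tsum_le_tsum fun m => ?_
    refine ENNReal.coe_le_coe.2 (inv_anti₀ (by positivity) ?_)
    calc (n : ℝ≥0) ^ (3 / 2 : ℝ) * (m : ℝ≥0) ^ (3 / 2 : ℝ)
        = n * m * (NNReal.sqrt n * NNReal.sqrt m) := by rw [rpow_eq, rpow_eq, mul_mul_mul_comm]
      _ ≤ n * m * (n + m) := by gcongr; exact sqrt_mul_sqrt_le _ _
      _ = n ^ 1 * m ^ 1 * (n + m) ^ 1 := by simp only [pow_one]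
  exact ne_top_of_le_ne_top (ENNReal.mul_ne_top hz hz) bound

lemma tornheimE_zero_middle_ne_top {a c : ℕ} (ha : 0 < a) (hc : 1 < c) : tornheimE a 0 c ≠ ∞ := by
  obtain ⟨a, rfl⟩ := Nat.exists_eq_succ_of_ne_zero ha.ne'
  obtain ⟨c, rfl⟩ := Nat.exists_eq_add_of_lt hc
  refine ne_top_of_le_ne_top tornheimE_one_one_one_ne_top ?_
  calc tornheimE (a + 1) 0 (1 + c + 1)
      ≤ tornheimE (a + 1) 1 (1 + c) := (tornheimE_succ_succ a 0 (1 + c)).symm ▸ le_add_self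
    _ ≤ tornheimE 1 1 1 := tornheimE_anti (by simp) le_rfl (by simp)

lemma zetaE_eq_pathSum (a : ℕ) : zetaE (a + 3) = pathSum (tornheimE · 0 ·) a 0 1 := by
  have h := tornheimE_one_one (a + 1)
  rw [tornheimE_succ_succ_eq_pathSum a 0 1, pathSum_zero] at h
  have finite := tornheimE_zero_middle_ne_top one_pos (by omega : 1 < a + 2)
  exact ((ENNReal.add_left_inj finite).1 h).symm

lemma coe_toReal_zetaE {a : ℕ} (ha : 1 < a) : ((zetaE a).toReal : ℂ) = riemannZeta a := by
  rw [zeta_nat_eq_tsum_of_gt_one ha, zetaE, ENNReal.tsum_toReal_eq fun _ => ENNReal.coe_ne_top,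
    ← tsum_pnat_eq_tsum_of_eq_zero (by simp [show a ≠ 0 by omega]), Complex.ofReal_tsum]
  simp

lemma tornheimN_eq_toReal {a b c : ℕ} (h : tornheimE a b c ≠ ∞) :
    tornheimN a b c = (tornheimE a b c).toReal := by
  rw [tornheimE] at h ⊢
  rw [ENNReal.tsum_toReal_eq (ENNReal.ne_top_of_tsum_ne_top h)]
  refine tsum_congr fun n => ?_
  rw [ENNReal.tsum_toReal_eq fun _ => ENNReal.coe_ne_top]
  simp only [ENNReal.coe_toReal]
  push_cast
  simp only [one_div]

lemma pathSum_tornheimE_ne_top (a : ℕ) {b c : ℕ} (hbc : 0 < b + c) :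
    pathSum (tornheimE · 0 ·) a b c ≠ ∞ := by
  refine ENNReal.sum_ne_top.2 fun p _ => ?_
  rw [nsmul_eq_mul]
  exact ENNReal.mul_ne_top (ENNReal.natCast_ne_top _)
    (tornheimE_zero_middle_ne_top p.1.succ_pos (by omega))

lemma toReal_pathSum_tornheimE (a : ℕ) {b c : ℕ} (hbc : 0 < b + c) :
    (pathSum (tornheimE · 0 ·) a b c).toReal
      = pathSum (tornheimN · 0 ·) a b c := by
  rw [pathSum, ENNReal.toReal_sum (ENNReal.sum_ne_top.1 (pathSum_tornheimE_ne_top a hbc))]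
  refine sum_congr rfl fun p _ => ?_
  rw [ENNReal.toReal_nsmul]
  exact congrArg _ (tornheimN_eq_toReal
    (tornheimE_zero_middle_ne_top p.1.succ_pos (by omega))).symm

theorem tornheimN_succ_succ_eq_pathSum {a b c : ℕ} (hac : 0 < a + c) (hbc : 0 < b + c) :
    tornheimN (a + 1) (b + 1) c
      = pathSum (tornheimN · 0 ·) a b c + pathSum (tornheimN · 0 ·) b a c := by
  have ha := pathSum_tornheimE_ne_top a hbc
  have hb := pathSum_tornheimE_ne_top b hac
  have hE := tornheimE_succ_succ_eq_pathSum a b c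
  rw [tornheimN_eq_toReal (hE ▸ ENNReal.add_ne_top.2 ⟨ha, hb⟩), hE, ENNReal.toReal_add ha hb,
    toReal_pathSum_tornheimE a hbc, toReal_pathSum_tornheimE b hac]

theorem riemannZeta_mul_eq_pathSum {a b : ℕ} (ha : 0 < a) (hb : 0 < b) :
    riemannZeta (a + 1 : ℕ) * riemannZeta (b + 1 : ℕ)
      = (pathSum (tornheimN · 0 ·) a b 0
        + pathSum (tornheimN · 0 ·) b a 0 : ℝ) := by
  have hE := tornheimE_zero_right (a + 1) (b + 1)
  rw [tornheimE_succ_succ_eq_pathSum] at hE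
  rw [← toReal_pathSum_tornheimE a (by omega), ← toReal_pathSum_tornheimE b (by omega),
    ← ENNReal.toReal_add (pathSum_tornheimE_ne_top a (by omega))
      (pathSum_tornheimE_ne_top b (by omega)), hE,
    ENNReal.toReal_mul, Complex.ofReal_mul, coe_toReal_zetaE (by omega),
    coe_toReal_zetaE (by omega)]

theorem riemannZeta_mul_eq_stuffle {a b : ℕ} (ha : 1 < a) (hb : 1 < b) :
    riemannZeta a * riemannZeta b
      = riemannZeta (a + b : ℕ) + tornheimN a 0 b + tornheimN b 0 a := by
  have hab := tornheimE_zero_middle_ne_top (by omega : 0 < a) hb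
  have hba := tornheimE_zero_middle_ne_top (by omega : 0 < b) ha
  have hz := zetaE_ne_top (by omega : 1 < a + b)
  rw [tornheimN_eq_toReal hab, tornheimN_eq_toReal hba, ← coe_toReal_zetaE ha,
    ← coe_toReal_zetaE hb, ← coe_toReal_zetaE (by omega : 1 < a + b)]
  norm_cast
  rw [← ENNReal.toReal_mul, zetaE_mul_zetaE_eq_stuffle,
    ENNReal.toReal_add (ENNReal.add_ne_top.2 ⟨hz, hab⟩) hba, ENNReal.toReal_add hz hab]

theorem riemannZeta_eq_pathSum (a : ℕ) :
    riemannZeta (a + 3 : ℕ) = (pathSum (tornheimN · 0 ·) a 0 1 : ℝ) := by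
  rw [← coe_toReal_zetaE (by omega), zetaE_eq_pathSum, toReal_pathSum_tornheimE a (by norm_num)]

theorem tornheim_432 :
    ((tornheimN 4 3 2 : ℝ) : ℂ)
      = ((Real.pi : ℂ) ^ 4 / 90) * riemannZeta 5
        + ((Real.pi : ℂ) ^ 2 / 6) * riemannZeta 7 - (5 / 2) * riemannZeta 9 := by
  have reduction := congrArg Complex.ofReal <|
    tornheimN_succ_succ_eq_pathSum (a := 3) (b := 2) (c := 2) (by simp) (by simp)
  have shuffle_two_seven := riemannZeta_mul_eq_pathSum (a := 1) (b := 6) (by simp) (by simp)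
  have shuffle_three_six := riemannZeta_mul_eq_pathSum (a := 2) (b := 5) (by simp) (by simp)
  have shuffle_four_five := riemannZeta_mul_eq_pathSum (a := 3) (b := 4) (by simp) (by simp)
  have stuffle_two_seven := riemannZeta_mul_eq_stuffle (a := 2) (b := 7) (by simp) (by simp)
  have stuffle_three_six := riemannZeta_mul_eq_stuffle (a := 3) (b := 6) (by simp) (by simp)
  have stuffle_four_five := riemannZeta_mul_eq_stuffle (a := 4) (b := 5) (by simp) (by simp)
  have sum_formula := riemannZeta_eq_pathSum 6
  simp only [pathSum, Nat.sum_antidiagonal_succ, Nat.antidiagonal_zero, sum_singleton, Nat.choose,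
    Nat.reduceAdd, nsmul_eq_mul] at *
  push_cast at *
  rw [← riemannZeta_four, ← riemannZeta_two]
  linear_combination reduction - (shuffle_two_seven - shuffle_three_six + shuffle_four_five) / 2
    - (stuffle_two_seven + stuffle_three_six + stuffle_four_five) / 2 + sum_formula
end

section
/- For positive even integers n1, n2, n3, the symmetrized Tornheim sum satisfies T(n1,n2,n3) + T(n2,n3,n1) + T(n3,n1,n2) = (-1)^{(n1+n2+n3)/2} \frac{(2\pi)^{n1+n2+n3}}{2 (n1-1)!(n2-1)!(n3-1)!} \cdot \frac{-1}{n1 n2 n3} \int_0^1 B_{n1}(q) B_{n2}(q) B_{n3}(q) dq. -/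
/-!
On `[0, 1]` the Bernoulli polynomial of even degree `k > 0` is a constant multiple of the cosine
series `∑ n, cos (2 * π * n * x) / n ^ k`. The integral over a period of the product of three
absolutely convergent cosine series is a triple sum in which the frequencies `l`, `m`, `n`
contribute only if one of them is the sum of the other two, and these three cases give the three
Tornheim sums.
-/

open MeasureTheory Real

section Orthogonality

lemma integral_cos_two_pi_int_mul (m : ℤ) :
    ∫ x in (0 : ℝ)..1, cos (2 * π * m * x) = if m = 0 then 1 else 0 := by
  split_ifs with hm
  · simp [hm]
  · have hne : 2 * π * m ≠ 0 := by positivity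
    have hsin : sin (2 * π * m) = 0 := by
      rw [← sin_int_mul_pi (2 * m)]
      push_cast
      ring_nf
    rw [intervalIntegral.integral_comp_mul_left _ hne, integral_cos]
    simp [hsin]

lemma cos_mul_cos_mul_cos (x y z : ℝ) :
    cos x * cos y * cos z
      = (cos (x + y + z) + cos (x + y - z) + cos (y + z - x) + cos (z + x - y)) / 4 := by
  simp only [cos_add, cos_sub, sin_add]
  ring

lemma integral_cos_mul_cos_mul_cos_int (l m n : ℤ) :
    ∫ x in (0 : ℝ)..1, cos (2 * π * l * x) * cos (2 * π * m * x) * cos (2 * π * n * x)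
      = ((if l + m + n = 0 then 1 else 0) + (if l + m = n then 1 else 0)
        + (if m + n = l then 1 else 0) + (if n + l = m then 1 else 0)) / 4 := by
  have hint (k : ℤ) : IntervalIntegrable (fun x ↦ cos (2 * π * k * x)) volume 0 1 :=
    Continuous.intervalIntegrable (by fun_prop) 0 1
  have hprod (x : ℝ) : cos (2 * π * l * x) * cos (2 * π * m * x) * cos (2 * π * n * x)
      = (cos (2 * π * (l + m + n : ℤ) * x) + cos (2 * π * (l + m - n : ℤ) * x)
        + cos (2 * π * (m + n - l : ℤ) * x) + cos (2 * π * (n + l - m : ℤ) * x)) / 4 := by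
    rw [cos_mul_cos_mul_cos]
    push_cast
    ring_nf
  simp_rw [hprod]
  rw [intervalIntegral.integral_div,
    intervalIntegral.integral_add (((hint _).add (hint _)).add (hint _)) (hint _),
    intervalIntegral.integral_add ((hint _).add (hint _)) (hint _),
    intervalIntegral.integral_add (hint _) (hint _)]
  simp only [integral_cos_two_pi_int_mul, sub_eq_zero]

lemma integral_cos_mul_cos_mul_cos_pnat (l m n : ℕ+) :
    ∫ x in (0 : ℝ)..1, cos (2 * π * (l : ℕ) * x) * cos (2 * π * (m : ℕ) * x)
        * cos (2 * π * (n : ℕ) * x)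
      = ((if l + m = n then 1 else 0) + (if m + n = l then 1 else 0)
        + (if n + l = m then 1 else 0)) / 4 := by
  have hne : (l + m + n : ℤ) ≠ 0 := by positivity
  have hadd (i j k : ℕ+) : (i + j : ℤ) = k ↔ i + j = k := by
    rw [← PNat.coe_inj, PNat.add_coe]
    norm_cast
  simpa [hne, hadd] using integral_cos_mul_cos_mul_cos_int l m n

end Orthogonality

lemma hasSum_mul_intervalIntegral {ι : Type*} [Countable ι] {w : ι → ℝ} (hw : Summable w)
    {φ : ι → ℝ → ℝ} (hφ : ∀ i, Continuous (φ i)) (hφ_le : ∀ i x, |φ i x| ≤ 1) (a b : ℝ) :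
    HasSum (fun i ↦ w i * ∫ x in a..b, φ i x) (∫ x in a..b, ∑' i, w i * φ i x) := by
  have hle (i : ι) (x : ℝ) : ‖w i * φ i x‖ ≤ ‖w i‖ := by
    rw [norm_mul]
    exact mul_le_of_le_one_right (norm_nonneg _) (hφ_le i x)
  simp_rw [← intervalIntegral.integral_const_mul]
  exact intervalIntegral.hasSum_integral_of_dominated_convergence (fun i _ ↦ ‖w i‖)
    (fun i ↦ (continuous_const.mul (hφ i)).aestronglyMeasurable)
    (fun i ↦ .of_forall fun x _ ↦ hle i x)
    (.of_forall fun _ _ ↦ hw.norm)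
    intervalIntegrable_const
    (.of_forall fun x _ ↦ (Summable.of_norm_bounded hw.norm fun i ↦ hle i x).hasSum)

section TripleProduct

variable {ι κ τ R : Type*} [NormedRing R] [CompleteSpace R] {u : ι → R} {v : κ → R} {w : τ → R}

lemma summable_mul_mul_of_summable_norm (hu : Summable (‖u ·‖)) (hv : Summable (‖v ·‖))
    (hw : Summable (‖w ·‖)) :
    Summable fun p : (ι × κ) × τ ↦ u p.1.1 * v p.1.2 * w p.2 :=
  summable_mul_of_summable_norm (f := fun q : ι × κ ↦ u q.1 * v q.2) (hu.mul_norm hv) hw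

lemma tsum_mul_tsum_mul_tsum_of_summable_norm (hu : Summable (‖u ·‖)) (hv : Summable (‖v ·‖))
    (hw : Summable (‖w ·‖)) :
    (∑' i, u i) * (∑' j, v j) * ∑' k, w k
      = ∑' p : (ι × κ) × τ, u p.1.1 * v p.1.2 * w p.2 := by
  rw [tsum_mul_tsum_of_summable_norm hu hv, tsum_mul_tsum_of_summable_norm (hu.mul_norm hv) hw]

end TripleProduct

/-- The Tornheim double series with arbitrary weights in place of inverse powers. -/
noncomputable def tornheimSum (u v w : ℕ+ → ℝ) : ℝ :=
  ∑' n, ∑' m, u n * v m * w (n + m)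

/-- The cosine series of period `1` with coefficients `u` and without constant term. -/
noncomputable def cosSeries (u : ℕ+ → ℝ) (x : ℝ) : ℝ :=
  ∑' n : ℕ+, u n * cos (2 * π * (n : ℕ) * x)

section Summable

variable {u v w : ℕ+ → ℝ}

lemma hasSum_ite_add_eq_tornheimSum (hu : Summable u) (hv : Summable v) (hw : Summable w) :
    HasSum (fun p : (ℕ+ × ℕ+) × ℕ+ ↦ u p.1.1 * v p.1.2 * w p.2
      * if p.1.1 + p.1.2 = p.2 then 1 else 0) (tornheimSum u v w) := by
  have hgraph : Function.Injective fun q : ℕ+ × ℕ+ ↦ (q, q.1 + q.2) :=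
    fun _ _ h ↦ congrArg Prod.fst h
  have hsum : Summable fun q : ℕ+ × ℕ+ ↦ u q.1 * v q.2 * w (q.1 + q.2) :=
    ((summable_mul_mul_of_summable_norm hu.norm hv.norm hw.norm).comp_injective hgraph :)
  have htsum : ∑' q : ℕ+ × ℕ+, u q.1 * v q.2 * w (q.1 + q.2) = tornheimSum u v w :=
    hsum.tsum_prod
  refine (hgraph.hasSum_iff fun p hp ↦ ?_).mp ?_
  · have hne : p.1.1 + p.1.2 ≠ p.2 := fun h ↦ hp ⟨p.1, Prod.ext rfl h⟩
    simp only [hne, if_false, mul_zero]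
  · simpa only [Function.comp_def, if_true, mul_one] using htsum ▸ hsum.hasSum

lemma hasSum_ite_add_eq_cyclic_tornheimSum (hu : Summable u) (hv : Summable v) (hw : Summable w) :
    HasSum (fun p : (ℕ+ × ℕ+) × ℕ+ ↦ u p.1.1 * v p.1.2 * w p.2
        * ((if p.1.1 + p.1.2 = p.2 then 1 else 0) + (if p.1.2 + p.2 = p.1.1 then 1 else 0)
          + (if p.2 + p.1.1 = p.1.2 then 1 else 0)))
      (tornheimSum u v w + tornheimSum v w u + tornheimSum w u v) := by
  let rotate : (ℕ+ × ℕ+) × ℕ+ ≃ (ℕ+ × ℕ+) × ℕ+ :=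
    (Equiv.prodAssoc ℕ+ ℕ+ ℕ+).trans (Equiv.prodComm ℕ+ (ℕ+ × ℕ+))
  have huvw := hasSum_ite_add_eq_tornheimSum hu hv hw
  have hvwu : HasSum (fun p : (ℕ+ × ℕ+) × ℕ+ ↦ v p.1.2 * w p.2 * u p.1.1
      * if p.1.2 + p.2 = p.1.1 then 1 else 0) (tornheimSum v w u) :=
    (rotate.hasSum_iff.mpr (hasSum_ite_add_eq_tornheimSum hv hw hu) :)
  have hwuv : HasSum (fun p : (ℕ+ × ℕ+) × ℕ+ ↦ w p.2 * u p.1.1 * v p.1.2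
      * if p.2 + p.1.1 = p.1.2 then 1 else 0) (tornheimSum w u v) :=
    (rotate.symm.hasSum_iff.mpr (hasSum_ite_add_eq_tornheimSum hw hu hv) :)
  exact ((huvw.add hvwu).add hwuv).congr_fun fun p ↦ by ring

lemma summable_norm_mul_cos (hu : Summable u) (x : ℝ) :
    Summable fun n : ℕ+ ↦ ‖u n * cos (2 * π * (n : ℕ) * x)‖ :=
  hu.norm.of_nonneg_of_le (fun _ ↦ norm_nonneg _) fun n ↦ by
    rw [norm_mul]
    exact mul_le_of_le_one_right (norm_nonneg _) (abs_cos_le_one _)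

lemma cosSeries_mul_cosSeries_mul_cosSeries (hu : Summable u) (hv : Summable v)
    (hw : Summable w) (x : ℝ) :
    cosSeries u x * cosSeries v x * cosSeries w x
      = ∑' p : (ℕ+ × ℕ+) × ℕ+, u p.1.1 * v p.1.2 * w p.2
        * (cos (2 * π * (p.1.1 : ℕ) * x) * cos (2 * π * (p.1.2 : ℕ) * x)
          * cos (2 * π * (p.2 : ℕ) * x)) := by
  simp only [cosSeries]
  rw [tsum_mul_tsum_mul_tsum_of_summable_norm (summable_norm_mul_cos hu x)
    (summable_norm_mul_cos hv x) (summable_norm_mul_cos hw x)]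
  exact tsum_congr fun p ↦ by ring

theorem integral_cosSeries_mul_cosSeries_mul_cosSeries (hu : Summable u) (hv : Summable v)
    (hw : Summable w) :
    ∫ x in (0 : ℝ)..1, cosSeries u x * cosSeries v x * cosSeries w x
      = (tornheimSum u v w + tornheimSum v w u + tornheimSum w u v) / 4 := by
  have hle (l m n : ℝ) : |cos l * cos m * cos n| ≤ 1 := by
    rw [abs_mul, abs_mul]
    exact mul_le_one₀ (mul_le_one₀ (abs_cos_le_one l) (abs_nonneg _) (abs_cos_le_one m))
      (abs_nonneg _) (abs_cos_le_one n)
  have hintegral := hasSum_mul_intervalIntegral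
    (summable_mul_mul_of_summable_norm hu.norm hv.norm hw.norm)
    (φ := fun p x ↦ cos (2 * π * (p.1.1 : ℕ) * x) * cos (2 * π * (p.1.2 : ℕ) * x)
      * cos (2 * π * (p.2 : ℕ) * x))
    (fun _ ↦ by fun_prop) (fun _ _ ↦ hle _ _ _) 0 1
  simp only [integral_cos_mul_cos_mul_cos_pnat, ← mul_div_assoc,
    ← cosSeries_mul_cosSeries_mul_cosSeries hu hv hw] at hintegral
  exact hintegral.unique ((hasSum_ite_add_eq_cyclic_tornheimSum hu hv hw).div_const 4)

end Summable

section InversePowers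

lemma tornheimN_eq_tornheimSum (a b c : ℕ) :
    tornheimN a b c = tornheimSum (fun n ↦ 1 / ((n : ℕ) : ℝ) ^ a)
      (fun n ↦ 1 / ((n : ℕ) : ℝ) ^ b) (fun n ↦ 1 / ((n : ℕ) : ℝ) ^ c) := by
  simp only [tornheimN, tornheimSum, one_div_mul_one_div, PNat.add_coe]

lemma summable_one_div_pnat_pow {k : ℕ} (hk : 1 < k) :
    Summable fun n : ℕ+ ↦ 1 / ((n : ℕ) : ℝ) ^ k :=
  (summable_one_div_nat_pow.mpr hk).comp_injective PNat.coe_injective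

/-- The ratio of the cosine series `∑ n, cos (2 * π * n * x) / n ^ k` to the Bernoulli polynomial
`B_k(x)` on `[0, 1]`, for even `k > 0`. The factor `-1 / k` is the one in the Hurwitz zeta value
`ζ(1 - k, x) = -B_k(x) / k`. -/
noncomputable def cosSeriesBernoulliRatio (k : ℕ) : ℝ :=
  (-1) ^ (k / 2) * ((2 * π) ^ k / (2 * (k - 1).factorial)) * (-1 / k)

lemma cosSeries_one_div_pow_of_even {k : ℕ} (hk : 0 < k) (hk_even : Even k) {x : ℝ}
    (hx : x ∈ Set.Icc (0 : ℝ) 1) :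
    cosSeries (fun n ↦ 1 / ((n : ℕ) : ℝ) ^ k) x
      = cosSeriesBernoulliRatio k * Polynomial.aeval x (Polynomial.bernoulli k) := by
  obtain ⟨j, rfl⟩ := even_iff_exists_two_mul.mp hk_even
  have hsum := hasSum_one_div_nat_pow_mul_cos (k := j) (by lia) hx
  rw [Polynomial.eval_map_algebraMap] at hsum
  have hfact : ((2 * j).factorial : ℝ) = (2 * j : ℕ) * (2 * j - 1).factorial := by
    exact_mod_cast (Nat.mul_factorial_pred hk.ne').symm
  have hratio : cosSeriesBernoulliRatio (2 * j)
      = (-1) ^ (j + 1) * (2 * π) ^ (2 * j) / 2 / (2 * j).factorial := by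
    rw [cosSeriesBernoulliRatio, hfact, Nat.mul_div_cancel_left j two_pos]
    field_simp
    ring
  rw [hratio, ← hsum.tsum_eq]
  exact tsum_pnat_eq_tsum_of_eq_zero (f := fun n : ℕ ↦ 1 / (n : ℝ) ^ (2 * j) * cos (2 * π * n * x))
    (by simp [hk.ne'])

lemma integral_cosSeries_one_div_pow_mul_mul_of_even {k l m : ℕ} (hk : 0 < k) (hl : 0 < l)
    (hm : 0 < m) (hk_even : Even k) (hl_even : Even l) (hm_even : Even m) :
    ∫ x in (0 : ℝ)..1, cosSeries (fun n ↦ 1 / ((n : ℕ) : ℝ) ^ k) x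
        * cosSeries (fun n ↦ 1 / ((n : ℕ) : ℝ) ^ l) x
        * cosSeries (fun n ↦ 1 / ((n : ℕ) : ℝ) ^ m) x
      = cosSeriesBernoulliRatio k * cosSeriesBernoulliRatio l * cosSeriesBernoulliRatio m
        * ∫ x in (0 : ℝ)..1, Polynomial.aeval x (Polynomial.bernoulli k)
          * Polynomial.aeval x (Polynomial.bernoulli l)
          * Polynomial.aeval x (Polynomial.bernoulli m) := by
  rw [← intervalIntegral.integral_const_mul]
  refine intervalIntegral.integral_congr fun x hx ↦ ?_
  rw [Set.uIcc_of_le zero_le_one] at hx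
  simp only [cosSeries_one_div_pow_of_even hk hk_even hx,
    cosSeries_one_div_pow_of_even hl hl_even hx, cosSeries_one_div_pow_of_even hm hm_even hx]
  ring

lemma cyclic_tornheimN_eq_integral_cosSeries {a b c : ℕ} (ha : 1 < a) (hb : 1 < b) (hc : 1 < c) :
    tornheimN a b c + tornheimN b c a + tornheimN c a b
      = 4 * ∫ x in (0 : ℝ)..1, cosSeries (fun n ↦ 1 / ((n : ℕ) : ℝ) ^ a) x
        * cosSeries (fun n ↦ 1 / ((n : ℕ) : ℝ) ^ b) x
        * cosSeries (fun n ↦ 1 / ((n : ℕ) : ℝ) ^ c) x := by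
  rw [integral_cosSeries_mul_cosSeries_mul_cosSeries (summable_one_div_pnat_pow ha)
    (summable_one_div_pnat_pow hb) (summable_one_div_pnat_pow hc)]
  simp only [tornheimN_eq_tornheimSum]
  ring

end InversePowers

theorem tornheim_sym_even (n1 n2 n3 : ℕ) (h1 : 0 < n1) (h2 : 0 < n2) (h3 : 0 < n3)
    (e1 : Even n1) (e2 : Even n2) (e3 : Even n3) :
    tornheimN n1 n2 n3 + tornheimN n2 n3 n1 + tornheimN n3 n1 n2
      = (-1) ^ ((n1 + n2 + n3) / 2)
          * ((2 * Real.pi) ^ (n1 + n2 + n3)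
              / (2 * (Nat.factorial (n1 - 1) : ℝ) * (Nat.factorial (n2 - 1) : ℝ)
                  * (Nat.factorial (n3 - 1) : ℝ)))
          * (-1 / ((n1 : ℝ) * (n2 : ℝ) * (n3 : ℝ)))
          * ∫ q in (0:ℝ)..1,
              (Polynomial.aeval q (Polynomial.bernoulli n1))
                * (Polynomial.aeval q (Polynomial.bernoulli n2))
                * (Polynomial.aeval q (Polynomial.bernoulli n3)) := by
  have one_lt {k : ℕ} (hk : 0 < k) (hk_even : Even k) : 1 < k := by grind
  have hdiv : (n1 + n2 + n3) / 2 = n1 / 2 + n2 / 2 + n3 / 2 := by grind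
  rw [cyclic_tornheimN_eq_integral_cosSeries (one_lt h1 e1) (one_lt h2 e2) (one_lt h3 e3),
    integral_cosSeries_one_div_pow_mul_mul_of_even h1 h2 h3 e1 e2 e3, hdiv]
  simp only [cosSeriesBernoulliRatio, pow_add]
  field_simp
  ring
end
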